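/- Let n ≥ 1, let W : Fin n → ℝ³ be an eigenvalue matrix with rows W i = (Wᵢ₁, Wᵢ₂, Wᵢ₃), let M = max over all i, j of |Wᵢⱼ| (the Bell number of W), and let p : Fin n → ℝ be nonnegative weights with ∑ᵢ p i = 1. Define E(XY) = ∑ᵢ p i · Wᵢ₁ · Wᵢ₂, E(YZ) = ∑ᵢ p i · Wᵢ₂ · Wᵢ₃, and E(XZ) = ∑ᵢ p i · Wᵢ₁ · Wᵢ₃. Then |E(XY) − E(YZ)| + E(XZ) ≤ M². -/

import Mathlib

theorem bell_pointwise (x y z M : ℝ) (hx : |x| ≤ M) (hy : |y| ≤ M) (hz : |z| ≤ M) :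
    |x * y - y * z| + x * z ≤ M ^ 2 := by
  have e : x * y - y * z = y * (x - z) := by ring
  rw [e, abs_mul]
  have h1 : |y| * |x - z| ≤ M * |x - z| := mul_le_mul_of_nonneg_right hy (abs_nonneg _)
  obtain ⟨hx1, hx2⟩ := abs_le.mp hx
  obtain ⟨hz1, hz2⟩ := abs_le.mp hz
  rcases abs_cases (x - z) with ⟨h, _⟩ | ⟨h, _⟩ <;> rw [h] at h1 ⊢
  · nlinarith [mul_nonneg (sub_nonneg.2 hx2) (by linarith : 0 ≤ M + z)]
  · nlinarith [mul_nonneg (sub_nonneg.2 hz2) (by linarith : 0 ≤ M + x)]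

/-- Bell's inequality for a probability distribution `p` on the rows of an
eigenvalue matrix `W ∈ ℝ^{n×3}` with Bell number `M = max_{i,j} |W i j|`. -/
theorem bell_inequality_prob (n : ℕ) (hn : 1 ≤ n)
    (W : Fin n → Fin 3 → ℝ) (M : ℝ)
    (hM : IsGreatest (Set.range fun q : Fin n × Fin 3 => |W q.1 q.2|) M)
    (p : Fin n → ℝ) (hp : ∀ i, 0 ≤ p i) (hp1 : ∑ i, p i = 1) :
    |(∑ i, p i * (W i 0 * W i 1)) - ∑ i, p i * (W i 1 * W i 2)| +
      ∑ i, p i * (W i 0 * W i 2) ≤ M ^ 2 := by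
  have hb : ∀ i j, |W i j| ≤ M := fun i j => hM.2 ⟨(i, j), rfl⟩
  rw [← Finset.sum_sub_distrib]
  calc _ ≤ (∑ i, |p i * (W i 0 * W i 1) - p i * (W i 1 * W i 2)|) +
      ∑ i, p i * (W i 0 * W i 2) := by
        gcongr
        exact Finset.abs_sum_le_sum_abs _ _
    _ = ∑ i, p i * (|W i 0 * W i 1 - W i 1 * W i 2| + W i 0 * W i 2) := by
        rw [← Finset.sum_add_distrib]
        refine Finset.sum_congr rfl fun i _ => ?_
        rw [← mul_sub, abs_mul, abs_of_nonneg (hp i), mul_add]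
    _ ≤ ∑ i, p i * M ^ 2 := Finset.sum_le_sum fun i _ =>
        mul_le_mul_of_nonneg_left (bell_pointwise _ _ _ _ (hb i 0) (hb i 1) (hb i 2)) (hp i)
    _ = M ^ 2 := by rw [← Finset.sum_mul, hp1, one_mul]
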